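/- Let p, r be real numbers. The binomial sequence (C(np + r, n))_{n≥0} is positive definite if and only if either (p ≥ 1 and −1 ≤ r ≤ p − 1) or (p ≤ 0 and p − 1 ≤ r ≤ 0). -/

import Mathlib

/-- Generalized binomial coefficient `C(a,n) = a(a-1)⋯(a-n+1)/n!`. -/
noncomputable def gbinom (a : ℝ) (n : ℕ) : ℝ :=
  (∏ i ∈ Finset.range n, (a - i)) / (n.factorial : ℝ)

/-- A sequence of reals is positive definite if all quadratic forms
`∑_{i,j=0}^{m} s_{i+j} α_i α_j` are nonnegative. -/
def IsPosDefSeq (s : ℕ → ℝ) : Prop :=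
  ∀ m : ℕ, ∀ α : ℕ → ℝ,
    0 ≤ ∑ i ∈ Finset.range (m + 1), ∑ j ∈ Finset.range (m + 1), s (i + j) * α i * α j

/-!
For `p > 1`, Cauchy's formula gives `C(np + r, n)` as the integral of
`(1 + z) ^ (np + r) / z ^ (n + 1)` over a loop around `0`. Take the loop to be the curve on which
`(1 + z) ^ p / z` is real and positive, and parametrize its upper half by
`φ = arg (1 + z) ∈ (0, π / p)`: the sequence becomes the moment sequence of the strictly decreasing
function `(1 + z) ^ p / z` of `φ` against an explicit density, so it is positive definite iff that
density is nonnegative, that is, iff `-1 ≤ r ≤ p - 1`. If `r ≤ -1` the integrals diverge at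
`z = -1` for small `n`, but a tail starting at an even index is still a moment sequence with a
density of the same sign, and it inherits positive definiteness.

Positive definiteness survives pointwise limits, which yields sufficiency for `r = -1` and for
`p = 1`; necessity for `p = 1` is the Cauchy-Schwarz inequality between the terms of index `0`, `1`
and `2`. The identity `C(n - 1 - a, n) = (-1) ^ n C(a, n)` exchanges `(p, r)` with
`(1 - p, -1 - r)`, which covers `p ≤ 0` and reduces `0 < p < 1` to `p ≤ 1 / 2`. There some
even-indexed term is at most `0`, which would force the terms of index `1` and `2` to vanish
together, and they do not.
-/

open Set Filter Topology MeasureTheory Polynomial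

section GeneralizedBinomial

lemma succ_mul_gbinom_succ (a : ℝ) (n : ℕ) :
    (n + 1) * gbinom a (n + 1) = a * gbinom (a - 1) n := by
  have shift : ∏ k ∈ Finset.range n, (a - ((k + 1 : ℕ) : ℝ)) =
      ∏ k ∈ Finset.range n, (a - 1 - k) :=
    Finset.prod_congr rfl fun k _ => by push_cast; ring
  rw [gbinom, gbinom, Finset.prod_range_succ', shift, Nat.factorial_succ]
  push_cast
  field_simp
  ring

lemma gbinom_succ (a : ℝ) (n : ℕ) : gbinom a (n + 1) = gbinom a n * ((a - n) / (n + 1)) := by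
  rw [gbinom, gbinom, Finset.prod_range_succ, Nat.factorial_succ]
  push_cast
  field_simp

lemma gbinom_zero (a : ℝ) : gbinom a 0 = 1 := by simp [gbinom]

lemma gbinom_one (a : ℝ) : gbinom a 1 = a := by simp [gbinom]

lemma gbinom_two (a : ℝ) : gbinom a 2 = a * (a - 1) / 2 := by simp [gbinom, Finset.prod_range_succ]

lemma gbinom_reflect (a : ℝ) (n : ℕ) : gbinom (n - 1 - a) n = (-1) ^ n * gbinom a n := by
  have factors : ∏ j ∈ Finset.range n, ((n : ℝ) - 1 - a - ((n - 1 - j : ℕ) : ℝ)) =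
      ∏ j ∈ Finset.range n, (-1) * (a - j) := by
    refine Finset.prod_congr rfl fun j hj => ?_
    have hj : j + 1 ≤ n := Finset.mem_range.1 hj
    rw [Nat.sub_sub, add_comm 1 j, Nat.cast_sub hj]
    push_cast
    ring
  rw [gbinom, gbinom, ← Finset.prod_range_reflect, factors, Finset.prod_mul_distrib,
    Finset.prod_const, Finset.card_range, mul_div_assoc]

lemma continuous_gbinom (n : ℕ) : Continuous fun a => gbinom a n := by
  unfold gbinom
  fun_prop

lemma gbinom_nonneg {a : ℝ} {n : ℕ} (h : (n : ℝ) ≤ a + 1) : 0 ≤ gbinom a n := by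
  refine div_nonneg (Finset.prod_nonneg fun i hi => ?_) (Nat.cast_nonneg _)
  have : (i + 1 : ℝ) ≤ n := by exact_mod_cast Finset.mem_range.1 hi
  linarith

lemma gbinom_even_nonpos {a : ℝ} {M n : ℕ} (h₁ : 2 * M ≤ a) (h₂ : a ≤ 2 * M + 1) (hn : M < n) :
    gbinom a (2 * n) ≤ 0 := by
  induction n, hn using Nat.le_induction with
  | base =>
    rw [Nat.mul_succ, gbinom_succ]
    refine mul_nonpos_of_nonneg_of_nonpos (gbinom_nonneg ?_)
      (div_nonpos_of_nonpos_of_nonneg ?_ (by positivity)) <;> push_cast <;> linarith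
  | succ n hn ih =>
    have hMn : (M + 1 : ℝ) ≤ n := by exact_mod_cast hn
    rw [Nat.mul_succ, gbinom_succ, gbinom_succ, mul_assoc]
    refine mul_nonpos_of_nonpos_of_nonneg ih (mul_nonneg_of_nonpos_of_nonpos ?_ ?_) <;>
      refine div_nonpos_of_nonpos_of_nonneg ?_ (by positivity) <;> push_cast <;> linarith

end GeneralizedBinomial

section PositiveDefiniteSequences

/-- The linear functional on polynomials whose value at `X ^ n` is `s n`. A sequence is positive
definite exactly when this functional is nonnegative on squares. -/
noncomputable def momentFunctional (s : ℕ → ℝ) : ℝ[X] →ₗ[ℝ] ℝ :=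
  Polynomial.lsum fun n => s n • LinearMap.id

lemma momentFunctional_monomial (s : ℕ → ℝ) (n : ℕ) (c : ℝ) :
    momentFunctional s (monomial n c) = s n * c := by
  simp [momentFunctional, Polynomial.lsum_apply, sum_monomial_index]

lemma momentFunctional_sq_sum_monomial (s : ℕ → ℝ) (t : Finset ℕ) (α : ℕ → ℝ) :
    momentFunctional s ((∑ i ∈ t, monomial i (α i)) ^ 2) =
      ∑ i ∈ t, ∑ j ∈ t, s (i + j) * α i * α j := by
  simp only [sq, Finset.sum_mul_sum, monomial_mul_monomial, map_sum, momentFunctional_monomial,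
    mul_assoc]

lemma isPosDefSeq_iff_momentFunctional {s : ℕ → ℝ} :
    IsPosDefSeq s ↔ ∀ P : ℝ[X], 0 ≤ momentFunctional s (P ^ 2) := by
  refine ⟨fun h P => ?_, fun h m α => ?_⟩
  · rw [P.as_sum_range, momentFunctional_sq_sum_monomial]
    exact h P.natDegree P.coeff
  · rw [← momentFunctional_sq_sum_monomial]
    exact h _

namespace IsPosDefSeq

variable {s : ℕ → ℝ}

lemma neg_one_pow_mul (h : IsPosDefSeq s) : IsPosDefSeq fun n => (-1) ^ n * s n := by
  intro m α
  refine (h m fun i => (-1) ^ i * α i).trans_eq ?_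
  refine Finset.sum_congr rfl fun i _ => Finset.sum_congr rfl fun j _ => ?_
  simp only [pow_add]
  ring

lemma shift (h : IsPosDefSeq s) (k : ℕ) : IsPosDefSeq fun n => s (n + 2 * k) := by
  rw [isPosDefSeq_iff_momentFunctional] at h ⊢
  have shift_eq (Q : ℝ[X]) :
      momentFunctional (fun n => s (n + 2 * k)) Q = momentFunctional s (Q * X ^ (2 * k)) := by
    induction Q using Polynomial.induction_on' with
    | add Q R hQ hR => rw [map_add, hQ, hR, add_mul, map_add]
    | monomial n c => rw [monomial_mul_X_pow, momentFunctional_monomial, momentFunctional_monomial]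
  intro P
  rw [shift_eq, mul_comm 2 k, pow_mul, ← mul_pow]
  exact h _

lemma sq_le_mul (h : IsPosDefSeq s) (i j : ℕ) : s (i + j) ^ 2 ≤ s (2 * i) * s (2 * j) := by
  have quadratic_nonneg (x : ℝ) : 0 ≤ s (2 * i) * (x * x) + 2 * s (i + j) * x + s (2 * j) := by
    have hP := isPosDefSeq_iff_momentFunctional.1 h (monomial i x + monomial j 1)
    have expand : (monomial i x + monomial j (1 : ℝ)) ^ 2 =
        monomial (2 * i) (x * x) + monomial (i + j) (2 * x) + monomial (2 * j) 1 := by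
      rw [add_sq, sq, sq, mul_assoc, two_mul, two_mul, two_mul, two_mul, map_add]
      simp only [monomial_mul_monomial, mul_one]
    simp only [expand, map_add, momentFunctional_monomial] at hP
    linarith
  have discrim_nonpos := discrim_le_zero quadratic_nonneg
  rw [discrim] at discrim_nonpos
  linarith

lemma even_nonneg (h : IsPosDefSeq s) (i : ℕ) : 0 ≤ s (2 * i) := by
  have hP := isPosDefSeq_iff_momentFunctional.1 h (monomial i 1)
  rwa [sq, monomial_mul_monomial, momentFunctional_monomial, mul_one, mul_one, ← two_mul] at hP

lemma two_eq_zero_of_even_eq_zero (h : IsPosDefSeq s) {n : ℕ} (hn : n ≠ 0) (hs : s (2 * n) = 0) :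
    s 2 = 0 := by
  obtain ⟨m, rfl⟩ := Nat.exists_eq_succ_of_ne_zero hn
  clear hn
  induction m with
  | zero => exact hs
  | succ m ih =>
    have hsq := h.sq_le_mul (m + 2) m
    rw [hs, zero_mul] at hsq
    have hs' := pow_eq_zero_iff two_ne_zero |>.1 (le_antisymm hsq (sq_nonneg _))
    exact ih ((congrArg s (by omega)).trans hs')

lemma one_eq_zero_of_two_eq_zero (h : IsPosDefSeq s) (hs : s 2 = 0) : s 1 = 0 := by
  have hsq := h.sq_le_mul 0 1
  rw [mul_one, hs, mul_zero, zero_add] at hsq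
  exact pow_eq_zero_iff two_ne_zero |>.1 (le_antisymm hsq (sq_nonneg _))

end IsPosDefSeq

lemma isClosed_setOf_isPosDefSeq : IsClosed {s | IsPosDefSeq s} := by
  simp only [IsPosDefSeq, ofPred_forall]
  exact isClosed_iInter fun m => isClosed_iInter fun α =>
    isClosed_le continuous_const (by fun_prop)

end PositiveDefiniteSequences

section MomentIntegrals

variable {X : Type*} [MeasurableSpace X] {μ : Measure X} {ρ w : X → ℝ} {a b : ℝ}

lemma integrable_comp_mul (hρ : AEStronglyMeasurable ρ μ) (hρab : ∀ᵐ x ∂μ, ρ x ∈ Icc a b)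
    (hw : Integrable w μ) {f : ℝ → ℝ} (hf : Continuous f) :
    Integrable (fun x => f (ρ x) * w x) μ := by
  obtain ⟨C, hC⟩ := isCompact_Icc.exists_bound_of_continuousOn (s := Icc a b) hf.continuousOn
  exact hw.bdd_mul (hf.comp_aestronglyMeasurable hρ) (hρab.mono fun x hx => hC _ hx)

lemma momentFunctional_integral (hρ : AEStronglyMeasurable ρ μ) (hρab : ∀ᵐ x ∂μ, ρ x ∈ Icc a b)
    (hw : Integrable w μ) (P : ℝ[X]) :
    momentFunctional (fun n => ∫ x, ρ x ^ n * w x ∂μ) P = ∫ x, P.eval (ρ x) * w x ∂μ := by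
  induction P using Polynomial.induction_on' with
  | add P Q hP hQ =>
    rw [map_add, hP, hQ, ← integral_add (integrable_comp_mul hρ hρab hw P.continuous)
      (integrable_comp_mul hρ hρab hw Q.continuous)]
    simp only [eval_add, add_mul]
  | monomial n c =>
    rw [momentFunctional_monomial, ← integral_mul_const]
    simp only [eval_monomial, mul_comm, mul_left_comm]

lemma isPosDefSeq_integral_pow_mul (hρ : AEStronglyMeasurable ρ μ)
    (hρab : ∀ᵐ x ∂μ, ρ x ∈ Icc a b) (hw : Integrable w μ) (hw₀ : 0 ≤ᵐ[μ] w) :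
    IsPosDefSeq fun n => ∫ x, ρ x ^ n * w x ∂μ := by
  refine isPosDefSeq_iff_momentFunctional.2 fun P => ?_
  rw [momentFunctional_integral hρ hρab hw]
  refine integral_nonneg_of_ae (hw₀.mono fun x hx => mul_nonneg ?_ hx)
  rw [eval_pow]
  exact sq_nonneg _

lemma IsPosDefSeq.integral_sq_comp_mul_nonneg (hρ : AEStronglyMeasurable ρ μ)
    (hρab : ∀ᵐ x ∂μ, ρ x ∈ Icc a b) (hw : Integrable w μ)
    (h : IsPosDefSeq fun n => ∫ x, ρ x ^ n * w x ∂μ) {f : ℝ → ℝ} (hf : Continuous f) :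
    0 ≤ ∫ x, f (ρ x) ^ 2 * w x ∂μ := by
  have exists_poly (n : ℕ) : ∃ P : ℝ[X], ∀ y ∈ Icc a b, |P.eval y - f y| < 1 / (n + 1) :=
    exists_polynomial_near_of_continuousOn a b f hf.continuousOn _ (by positivity)
  choose P hP using exists_poly
  obtain ⟨C, hC⟩ := isCompact_Icc.exists_bound_of_continuousOn (s := Icc a b) hf.continuousOn
  have poly_tendsto {y : ℝ} (hy : y ∈ Icc a b) :
      Tendsto (fun n => (P n).eval y) atTop (𝓝 (f y)) :=
    tendsto_iff_norm_sub_tendsto_zero.2 <| squeeze_zero (fun _ => norm_nonneg _)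
      (fun n => (hP n y hy).le) tendsto_one_div_add_atTop_nhds_zero_nat
  have poly_bound (n : ℕ) {y : ℝ} (hy : y ∈ Icc a b) : |(P n).eval y| ≤ C + 1 := by
    have hle : (1 : ℝ) / (n + 1) ≤ 1 := div_le_one_of_le₀ (by simp) (by positivity)
    have hfy : |f y| ≤ C := hC y hy
    have := abs_sub_abs_le_abs_sub ((P n).eval y) (f y)
    linarith [hP n y hy]
  have tendsto_integral :
      Tendsto (fun n => ∫ x, (P n ^ 2).eval (ρ x) * w x ∂μ) atTop
        (𝓝 (∫ x, f (ρ x) ^ 2 * w x ∂μ)) := by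
    refine tendsto_integral_of_dominated_convergence (fun x => (C + 1) ^ 2 * ‖w x‖)
      (fun n => (integrable_comp_mul hρ hρab hw (P n ^ 2).continuous).aestronglyMeasurable)
      (hw.norm.const_mul _) (fun n => hρab.mono fun x hx => ?_) (hρab.mono fun x hx => ?_)
    · rw [norm_mul, eval_pow, norm_pow]
      gcongr
      exact poly_bound n hx
    · simp only [eval_pow]
      exact ((poly_tendsto hx).pow 2).mul_const _
  refine ge_of_tendsto' tendsto_integral fun n => ?_
  rw [← momentFunctional_integral hρ hρab hw]
  exact isPosDefSeq_iff_momentFunctional.1 h (P n)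

end MomentIntegrals

section MomentIntervalIntegrals

variable {ρ w : ℝ → ℝ} {a b : ℝ}

lemma ae_mem_Icc_of_antitoneOn (hρ : AntitoneOn ρ (Icc a b)) :
    ∀ᵐ x ∂volume.restrict (Ioc a b), ρ x ∈ Icc (ρ b) (ρ a) := by
  filter_upwards [ae_restrict_mem measurableSet_Ioc] with x hx
  have hab : a ≤ b := hx.1.le.trans hx.2
  exact ⟨hρ (Ioc_subset_Icc_self hx) (right_mem_Icc.2 hab) hx.2,
    hρ (left_mem_Icc.2 hab) (Ioc_subset_Icc_self hx) hx.1.le⟩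

lemma aestronglyMeasurable_of_antitoneOn_Icc (hρ : AntitoneOn ρ (Icc a b)) :
    AEStronglyMeasurable ρ (volume.restrict (Ioc a b)) :=
  (aemeasurable_restrict_of_antitoneOn measurableSet_Ioc
    (hρ.mono Ioc_subset_Icc_self)).aestronglyMeasurable

lemma isPosDefSeq_intervalIntegral_pow_mul (hab : a ≤ b) (hρ : AntitoneOn ρ (Icc a b))
    (hw : IntervalIntegrable w volume a b) (hw₀ : ∀ x ∈ Ioo a b, 0 ≤ w x) :
    IsPosDefSeq fun n => ∫ x in a..b, ρ x ^ n * w x := by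
  simp only [intervalIntegral.integral_of_le hab]
  refine isPosDefSeq_integral_pow_mul (aestronglyMeasurable_of_antitoneOn_Icc hρ)
    (ae_mem_Icc_of_antitoneOn hρ) hw.1 ?_
  rw [← restrict_Ioo_eq_restrict_Ioc]
  exact ae_restrict_of_forall_mem measurableSet_Ioo hw₀

lemma exists_continuous_comp_pos_on_Ioo (hρ : StrictAntiOn ρ (Icc a b)) {c d : ℝ}
    (hc : c ∈ Icc a b) (hd : d ∈ Icc a b) (hcd : c < d) :
    ∃ f : ℝ → ℝ, Continuous f ∧ (∀ t ∈ Ioo c d, 0 < f (ρ t)) ∧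
      ∀ t ∈ Icc a b, t ∉ Ioo c d → f (ρ t) = 0 := by
  refine ⟨fun y => max 0 ((y - ρ d) * (ρ c - y)), by fun_prop, fun t ht => ?_, fun t ht htcd => ?_⟩
  · have htab : t ∈ Icc a b := ⟨hc.1.trans ht.1.le, ht.2.le.trans hd.2⟩
    exact lt_max_of_lt_right <| mul_pos (sub_pos.2 (hρ htab hd ht.2)) (sub_pos.2 (hρ hc htab ht.1))
  · refine max_eq_left ?_
    rcases le_or_gt t c with htc | htc
    · exact mul_nonpos_of_nonneg_of_nonpos
        (sub_nonneg.2 (hρ.antitoneOn ht hd (htc.trans hcd.le)))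
        (sub_nonpos.2 (hρ.antitoneOn ht hc htc))
    · have hdt : d ≤ t := not_lt.1 fun h => htcd ⟨htc, h⟩
      exact mul_nonpos_of_nonpos_of_nonneg (sub_nonpos.2 (hρ.antitoneOn hd ht hdt))
        (sub_nonneg.2 (hρ.antitoneOn hc ht (hcd.le.trans hdt)))

lemma IsPosDefSeq.weight_nonneg (hρ : StrictAntiOn ρ (Icc a b))
    (hw : IntervalIntegrable w volume a b) (hwc : ContinuousOn w (Ioo a b))
    (h : IsPosDefSeq fun n => ∫ x in a..b, ρ x ^ n * w x) {x : ℝ} (hx : x ∈ Ioo a b) :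
    0 ≤ w x := by
  by_contra! hwx
  obtain ⟨ε, hε, hball⟩ := Metric.nhds_basis_closedBall.mem_iff.1 <|
    inter_mem (Ioo_mem_nhds hx.1 hx.2)
      ((hwc.continuousAt (Ioo_mem_nhds hx.1 hx.2)).eventually_lt continuousAt_const hwx)
  rw [Real.closedBall_eq_Icc] at hball
  have hcd : x - ε < x + ε := by linarith
  have hc : x - ε ∈ Icc a b := Ioo_subset_Icc_self (hball (left_mem_Icc.2 hcd.le)).1
  have hd : x + ε ∈ Icc a b := Ioo_subset_Icc_self (hball (right_mem_Icc.2 hcd.le)).1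
  obtain ⟨f, hf, f_pos, f_eq_zero⟩ := exists_continuous_comp_pos_on_Ioo hρ hc hd hcd
  have hρm := aestronglyMeasurable_of_antitoneOn_Icc hρ.antitoneOn
  have hρab := ae_mem_Icc_of_antitoneOn hρ.antitoneOn
  simp only [intervalIntegral.integral_of_le (hx.1.trans hx.2).le] at h
  refine (h.integral_sq_comp_mul_nonneg hρm hρab hw.1 hf).not_gt ?_
  rw [← neg_pos, ← integral_neg, integral_pos_iff_support_of_nonneg_ae]
  · have support : Ioo (x - ε) (x + ε) ⊆ Function.support fun t => -(f (ρ t) ^ 2 * w t) :=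
      fun t ht => (neg_pos.2 (mul_neg_of_pos_of_neg (pow_pos (f_pos t ht) 2)
        (hball (Ioo_subset_Icc_self ht)).2)).ne'
    refine lt_of_lt_of_le ?_ (measure_mono support)
    rw [Measure.restrict_apply measurableSet_Ioo, inter_eq_left.2
      (Ioo_subset_Ioc_self.trans (Ioc_subset_Ioc hc.1 hd.2)), Real.volume_Ioo]
    exact ENNReal.ofReal_pos.2 (sub_pos.2 hcd)
  · filter_upwards [ae_restrict_mem measurableSet_Ioc] with t ht
    by_cases htcd : t ∈ Ioo (x - ε) (x + ε)
    · exact neg_nonneg.2 <| mul_nonpos_of_nonneg_of_nonpos (sq_nonneg _)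
        (hball (Ioo_subset_Icc_self htcd)).2.le
    · simp [f_eq_zero t (Ioc_subset_Icc_self ht) htcd]
  · exact (integrable_comp_mul hρm hρab hw.1 (hf.pow 2)).neg

end MomentIntervalIntegrals

section ContourIntegrals

/-- `IsBinomialContour γ γ' a b u v` says that `γ`, with derivative `γ'`, is a `C¹` arc through the
open upper half-plane between two nonzero real points `u, v ∈ [-1, ∞)`. The last field makes the
integrals of `(1 + z) ^ c * z ^ (-m)` along the arc converge for `c > -1` even if the arc ends at
the branch point `-1`. -/
structure IsBinomialContour (γ γ' : ℝ → ℂ) (a b u v : ℝ) : Prop where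
  le : a ≤ b
  hasDerivAt : ∀ x ∈ Icc a b, HasDerivAt γ (γ' x) x
  continuousOn_deriv : ContinuousOn γ' (Icc a b)
  im_pos : ∀ x ∈ Ioo a b, 0 < (γ x).im
  apply_left : γ a = u
  apply_right : γ b = v
  left_mem : u ∈ Ici (-1)
  right_mem : v ∈ Ici (-1)
  left_ne_zero : u ≠ 0
  right_ne_zero : v ≠ 0
  intervalIntegrable_norm_rpow :
    ∀ c > (-1 : ℝ), IntervalIntegrable (fun x => ‖1 + γ x‖ ^ c) volume a b

/-- The integrand `(1 + z) ^ c * z ^ (-m)` of the Cauchy integral for a binomial coefficient. -/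
noncomputable def binomialKernel (c : ℝ) (m : ℕ) (z : ℂ) : ℂ := (1 + z) ^ (c : ℂ) * (z ^ m)⁻¹

lemma one_add_mul_mem_slitPlane {z : ℂ} (hz : 0 < z.im) {t : ℝ} (ht : 0 ≤ t) :
    1 + t * z ∈ Complex.slitPlane := by
  rcases ht.eq_or_lt with rfl | ht
  · simp
  · refine Or.inr ?_
    simpa using ⟨ht.ne', hz.ne'⟩

lemma hasDerivAt_binomialKernel (c : ℝ) (m : ℕ) {z : ℂ} (hz : 0 < z.im) :
    HasDerivAt (binomialKernel c m)
      (c * binomialKernel (c - 1) m z - m * binomialKernel c (m + 1) z) z := by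
  have hz₀ : z ≠ 0 := fun h => by simp [h] at hz
  have hslit : 1 + z ∈ Complex.slitPlane := by
    simpa using one_add_mul_mem_slitPlane hz zero_le_one
  have power := ((hasDerivAt_id z).const_add 1).cpow_const (c := (c : ℂ)) hslit
  refine (power.mul ((hasDerivAt_pow m z).inv (pow_ne_zero m hz₀))).congr_deriv ?_
  simp only [binomialKernel, id, Pi.inv_apply, Complex.ofReal_sub, Complex.ofReal_one, mul_one]
  cases m with
  | zero => simp
  | succ m =>
    rw [Nat.add_sub_cancel]
    field_simp
    push_cast
    ring

lemma binomialKernel_succ_left {c : ℝ} {z : ℂ} (hz : 0 < z.im) :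
    binomialKernel (c + 1) 1 z = binomialKernel c 1 z + binomialKernel c 0 z := by
  have hz₀ : z ≠ 0 := fun h => by simp [h] at hz
  have hz₁ : 1 + z ≠ 0 := fun h => by simp [eq_neg_of_add_eq_zero_right h] at hz
  rw [binomialKernel, Complex.ofReal_add, Complex.ofReal_one, Complex.cpow_add _ _ hz₁,
    Complex.cpow_one, binomialKernel, binomialKernel]
  field_simp

namespace IsBinomialContour

variable {γ γ' : ℝ → ℂ} {a b u v : ℝ}

lemma continuousOn (h : IsBinomialContour γ γ' a b u v) : ContinuousOn γ (Icc a b) :=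
  fun x hx => (h.hasDerivAt x hx).continuousAt.continuousWithinAt

lemma im_pos_or_exists_real (h : IsBinomialContour γ γ' a b u v) {x : ℝ} (hx : x ∈ Icc a b) :
    0 < (γ x).im ∨ ∃ y : ℝ, γ x = y ∧ -1 ≤ y ∧ y ≠ 0 := by
  rcases eq_endpoints_or_mem_Ioo_of_mem_Icc hx with rfl | rfl | hx
  · exact .inr ⟨u, h.apply_left, h.left_mem, h.left_ne_zero⟩
  · exact .inr ⟨v, h.apply_right, h.right_mem, h.right_ne_zero⟩
  · exact .inl (h.im_pos x hx)

lemma ne_zero (h : IsBinomialContour γ γ' a b u v) {x : ℝ} (hx : x ∈ Icc a b) : γ x ≠ 0 := by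
  rcases h.im_pos_or_exists_real hx with him | ⟨y, hy, -, hy₀⟩
  · exact fun h₀ => by simp [h₀] at him
  · exact hy ▸ Complex.ofReal_ne_zero.2 hy₀

lemma re_nonneg_or_im_ne_zero (h : IsBinomialContour γ γ' a b u v) {x : ℝ} (hx : x ∈ Icc a b)
    {t : ℝ} (ht : t ∈ Icc (0 : ℝ) 1) : 0 ≤ (1 + t * γ x).re ∨ (1 + t * γ x).im ≠ 0 := by
  rcases h.im_pos_or_exists_real hx with him | ⟨y, hy, hy₁, -⟩
  · exact (one_add_mul_mem_slitPlane him ht.1).imp_left le_of_lt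
  · left
    simp only [hy, Complex.add_re, Complex.one_re, Complex.re_ofReal_mul, Complex.ofReal_re]
    nlinarith [ht.1, ht.2]

lemma continuousOn_one_add_mul_cpow (h : IsBinomialContour γ γ' a b u v) {c : ℝ} (hc : 0 < c) :
    ContinuousOn (fun q : ℝ × ℝ => (1 + q.1 * γ q.2) ^ (c : ℂ)) (Icc 0 1 ×ˢ Icc a b) := by
  intro q hq
  refine (Complex.continuousAt_cpow_const_of_re_pos (h.re_nonneg_or_im_ne_zero hq.2 hq.1)
    (by simpa)).comp_continuousWithinAt (f := fun q : ℝ × ℝ => 1 + q.1 * γ q.2) ?_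
  have := h.continuousOn.comp continuousOn_snd (s := Icc (0 : ℝ) 1 ×ˢ Icc a b) (fun q hq => hq.2)
  exact ((Complex.continuous_ofReal.comp continuous_fst).continuousOn.mul this q hq).const_add 1

lemma continuousOn_cpow (h : IsBinomialContour γ γ' a b u v) {c : ℝ} (hc : 0 < c) :
    ContinuousOn (fun x => (1 + γ x) ^ (c : ℂ)) (Icc a b) := by
  simpa [Function.comp_def] using (h.continuousOn_one_add_mul_cpow hc).comp
    (f := fun x : ℝ => ((1 : ℝ), x)) (by fun_prop) fun x hx => ⟨right_mem_Icc.2 zero_le_one, hx⟩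

lemma continuousOn_inv_pow (h : IsBinomialContour γ γ' a b u v) (m : ℕ) :
    ContinuousOn (fun x => (γ x ^ m)⁻¹) (Icc a b) :=
  (h.continuousOn.pow m).inv₀ fun _ hx => pow_ne_zero m (h.ne_zero hx)

lemma intervalIntegrable_cpow (h : IsBinomialContour γ γ' a b u v) {c : ℝ} (hc : -1 < c) :
    IntervalIntegrable (fun x => (1 + γ x) ^ (c : ℂ)) volume a b := by
  refine (h.intervalIntegrable_norm_rpow c hc).mono_fun' ?_
    (.of_forall fun x => (Complex.norm_cpow_real _ _).le)
  rw [uIoc_of_le h.le, ← restrict_Ioo_eq_restrict_Ioc]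
  refine ContinuousOn.aestronglyMeasurable (fun x hx => ?_) measurableSet_Ioo
  have hslit := one_add_mul_mem_slitPlane (h.im_pos x hx) zero_le_one
  rw [Complex.ofReal_one, one_mul] at hslit
  exact (((h.continuousOn.mono Ioo_subset_Icc_self) x hx).const_add 1).cpow continuousWithinAt_const
    hslit

lemma intervalIntegrable_im_mul_deriv (h : IsBinomialContour γ γ' a b u v) {f : ℝ → ℂ}
    (hf : IntervalIntegrable f volume a b) :
    IntervalIntegrable (fun x => (f x * γ' x).im) volume a b := by
  have := hf.mul_continuousOn (g := γ') (by rw [uIcc_of_le h.le]; exact h.continuousOn_deriv)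
  exact ⟨this.1.im, this.2.im⟩

lemma intervalIntegrable_binomialKernel (h : IsBinomialContour γ γ' a b u v) {c : ℝ} (hc : -1 < c)
    (m : ℕ) : IntervalIntegrable (fun x => (binomialKernel c m (γ x) * γ' x).im) volume a b :=
  h.intervalIntegrable_im_mul_deriv <| (h.intervalIntegrable_cpow hc).mul_continuousOn <| by
    rw [uIcc_of_le h.le]
    exact h.continuousOn_inv_pow m

lemma integral_im_deriv_eq_zero (h : IsBinomialContour γ γ' a b u v) {H H' : ℂ → ℂ}
    (hH : ∀ z : ℂ, 0 < z.im → HasDerivAt H (H' z) z)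
    (hcont : ContinuousOn (fun x => H (γ x)) (Icc a b))
    (hint : IntervalIntegrable (fun x => (H' (γ x) * γ' x).im) volume a b)
    (hreal : ∀ y : ℝ, -1 ≤ y → (H y).im = 0) :
    ∫ x in a..b, (H' (γ x) * γ' x).im = 0 := by
  rw [intervalIntegral.integral_eq_sub_of_hasDerivAt_of_le h.le
    (Complex.continuous_im.comp_continuousOn hcont) (fun x hx => ?_) hint]
  · simp only [Function.comp_apply, h.apply_left, h.apply_right, hreal _ h.left_mem,
      hreal _ h.right_mem, sub_zero]
  · exact Complex.imCLM.hasFDerivAt.comp_hasDerivAt x <|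
      (hH _ (h.im_pos x hx)).comp x (h.hasDerivAt x (Ioo_subset_Icc_self hx))

lemma cpow_im_eq_zero {y : ℝ} (hy : 0 ≤ y) (c : ℝ) : ((y : ℂ) ^ (c : ℂ)).im = 0 := by
  rw [← Complex.ofReal_cpow hy, Complex.ofReal_im]

lemma mul_integral_binomialKernel (h : IsBinomialContour γ γ' a b u v) {c : ℝ} (hc : 0 < c)
    (m : ℕ) :
    c * ∫ x in a..b, (binomialKernel (c - 1) m (γ x) * γ' x).im =
      m * ∫ x in a..b, (binomialKernel c (m + 1) (γ x) * γ' x).im := by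
  have hint₁ := (h.intervalIntegrable_binomialKernel (c := c - 1) (by linarith) m).const_mul c
  have hint₂ := (h.intervalIntegrable_binomialKernel (c := c) (by linarith) (m + 1)).const_mul m
  have expand (x : ℝ) : ((c * binomialKernel (c - 1) m (γ x) -
        m * binomialKernel c (m + 1) (γ x)) * γ' x).im =
      c * (binomialKernel (c - 1) m (γ x) * γ' x).im -
        m * (binomialKernel c (m + 1) (γ x) * γ' x).im := by
    rw [sub_mul, mul_assoc, mul_assoc, Complex.sub_im, Complex.im_ofReal_mul,
      ← Complex.ofReal_natCast, Complex.im_ofReal_mul]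
  rw [← sub_eq_zero, ← intervalIntegral.integral_const_mul, ← intervalIntegral.integral_const_mul,
    ← intervalIntegral.integral_sub hint₁ hint₂]
  simp only [← expand]
  refine h.integral_im_deriv_eq_zero (fun z hz => hasDerivAt_binomialKernel c m hz)
    ((h.continuousOn_cpow hc).mul (h.continuousOn_inv_pow m)) ?_ fun y hy => ?_
  · simpa only [expand] using hint₁.sub hint₂
  · have hpow := cpow_im_eq_zero (show 0 ≤ 1 + y by linarith) c
    rw [binomialKernel, ← Complex.ofReal_pow, ← Complex.ofReal_inv, Complex.im_mul_ofReal]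
    push_cast at hpow
    rw [hpow, zero_mul]

lemma integral_one_add_mul_cpow_mul_im {z : ℂ} (hz : 0 < z.im) {c : ℝ} (hc : c ≠ 0) (w : ℂ) :
    ∫ t in (0 : ℝ)..1, ((1 + t * z) ^ ((c - 1 : ℝ) : ℂ) * w).im =
      ((binomialKernel c 1 z * w).im - (z⁻¹ * w).im) / c := by
  have hz₀ : z ≠ 0 := fun h => by simp [h] at hz
  have hc₀ : (c : ℂ) ≠ 0 := by exact_mod_cast hc
  have hslit {t : ℝ} (ht : t ∈ uIcc (0 : ℝ) 1) : 1 + t * z ∈ Complex.slitPlane :=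
    one_add_mul_mem_slitPlane hz (uIcc_of_le (zero_le_one' ℝ) ▸ ht).1
  have hderiv (t : ℝ) (ht : t ∈ uIcc (0 : ℝ) 1) :
      HasDerivAt (fun t : ℝ => (1 + t * z) ^ (c : ℂ) / (c * z) * w)
        ((1 + t * z) ^ ((c - 1 : ℝ) : ℂ) * w) t := by
    have hlin := ((hasDerivAt_id (t : ℂ)).mul_const z).const_add 1
    refine (((hlin.cpow_const (c := (c : ℂ)) (hslit ht)).div_const
      (c * z)).mul_const w).comp_ofReal.congr_deriv ?_
    simp only [id, Complex.ofReal_sub, Complex.ofReal_one]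
    field_simp
  have hderiv_im (t : ℝ) (ht : t ∈ uIcc (0 : ℝ) 1) :
      HasDerivAt (fun t : ℝ => ((1 + t * z) ^ (c : ℂ) / (c * z) * w).im)
        ((1 + t * z) ^ ((c - 1 : ℝ) : ℂ) * w).im t :=
    Complex.imCLM.hasFDerivAt.comp_hasDerivAt t (hderiv t ht)
  have hcont : ContinuousOn (fun t : ℝ => (1 + t * z) ^ ((c - 1 : ℝ) : ℂ)) (uIcc 0 1) :=
    fun t ht => ContinuousAt.continuousWithinAt <| ContinuousAt.cpow (f := fun t : ℝ => 1 + t * z)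
      (by fun_prop) continuousAt_const (hslit ht)
  rw [intervalIntegral.integral_eq_sub_of_hasDerivAt hderiv_im
    (Complex.continuous_im.comp_continuousOn
      (hcont.mul continuousOn_const)).intervalIntegrable, binomialKernel]
  simp only [Complex.ofReal_one, one_mul, Complex.ofReal_zero, zero_mul, add_zero,
    Complex.one_cpow, pow_one]
  rw [← Complex.sub_im, ← Complex.sub_im, ← Complex.div_ofReal_im]
  congr 1
  field_simp

lemma integral_im_one_add_mul_cpow (h : IsBinomialContour γ γ' a b u v) {c : ℝ} (hc : 1 < c)
    {t : ℝ} (ht : t ∈ Ioc (0 : ℝ) 1) :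
    ∫ x in a..b, ((1 + t * γ x) ^ ((c - 1 : ℝ) : ℂ) * γ' x).im = 0 := by
  have ht₁ : t ∈ Icc (0 : ℝ) 1 := Ioc_subset_Icc_self ht
  have hct : (c : ℂ) * t ≠ 0 := by exact_mod_cast (mul_pos (by linarith) ht.1).ne'
  have hslice {e : ℝ} (he : 0 < e) :
      ContinuousOn (fun x => (1 + t * γ x) ^ (e : ℂ)) (Icc a b) :=
    (h.continuousOn_one_add_mul_cpow he).comp (f := fun x : ℝ => (t, x)) (by fun_prop)
      fun x hx => ⟨ht₁, hx⟩
  refine h.integral_im_deriv_eq_zero (H := fun z => (1 + t * z) ^ (c : ℂ) / (c * t))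
    (H' := fun z => (1 + t * z) ^ ((c - 1 : ℝ) : ℂ)) (fun z hz => ?_)
    ((hslice (by linarith)).div_const _)
    (h.intervalIntegrable_im_mul_deriv <| ContinuousOn.intervalIntegrable <| by
      rw [uIcc_of_le h.le]
      exact hslice (sub_pos.2 hc)) fun y hy => ?_
  · have hlin := ((hasDerivAt_id z).const_mul (t : ℂ)).const_add 1
    refine ((hlin.cpow_const (c := (c : ℂ)) (one_add_mul_mem_slitPlane hz ht.1.le)).div_const
      (c * t)).congr_deriv ?_
    simp only [id, Complex.ofReal_sub, Complex.ofReal_one, mul_one]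
    rw [mul_right_comm, mul_div_cancel_left₀ _ hct]
  · have hpow := cpow_im_eq_zero (show 0 ≤ 1 + t * y by nlinarith [ht.1, ht.2]) c
    rw [← Complex.ofReal_mul c t, Complex.div_ofReal_im]
    push_cast at hpow
    rw [hpow, zero_div]

/- Contracting the contour to the origin along `t * γ` does not change the integral, because the
`t`-derivative of the integrand has a primitive that is real at both ends. -/
lemma integral_binomialKernel_one_of_one_lt (h : IsBinomialContour γ γ' a b u v) {c : ℝ}
    (hc : 1 < c) :
    ∫ x in a..b, (binomialKernel c 1 (γ x) * γ' x).im = ∫ x in a..b, ((γ x)⁻¹ * γ' x).im := by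
  let F : ℝ → ℝ → ℝ := fun t x => ((1 + t * γ x) ^ ((c - 1 : ℝ) : ℂ) * γ' x).im
  have hF : ContinuousOn F.uncurry (Icc 0 1 ×ˢ Icc a b) :=
    Complex.continuous_im.comp_continuousOn <|
      (h.continuousOn_one_add_mul_cpow (sub_pos.2 hc)).mul <|
        h.continuousOn_deriv.comp continuousOn_snd fun q hq => hq.2
  have hFint : IntegrableOn F.uncurry (uIoc 0 1 ×ˢ uIoc a b) := by
    rw [uIoc_of_le zero_le_one, uIoc_of_le h.le]
    exact (hF.integrableOn_compact (isCompact_Icc.prod isCompact_Icc)).mono_set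
      (prod_mono Ioc_subset_Icc_self Ioc_subset_Icc_self)
  have outer : ∫ t in (0 : ℝ)..1, ∫ x in a..b, F t x = 0 := by
    rw [intervalIntegral.integral_congr_Ioo_of_le zero_le_one fun t ht =>
      h.integral_im_one_add_mul_cpow hc (Ioo_subset_Ioc_self ht), intervalIntegral.integral_zero]
  rw [intervalIntegral_intervalIntegral_swap hFint,
    intervalIntegral.integral_congr_Ioo_of_le h.le fun x hx =>
      integral_one_add_mul_cpow_mul_im (h.im_pos x hx) (by linarith : c ≠ 0) (γ' x),
    intervalIntegral.integral_div, intervalIntegral.integral_sub, div_eq_zero_iff,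
    sub_eq_zero] at outer
  · exact outer.resolve_right (by linarith)
  · exact h.intervalIntegrable_binomialKernel (by linarith) 1
  · exact h.intervalIntegrable_im_mul_deriv <| ContinuousOn.intervalIntegrable <| by
      rw [uIcc_of_le h.le]
      exact h.continuousOn.inv₀ fun _ hx => h.ne_zero hx

lemma integral_binomialKernel_one (h : IsBinomialContour γ γ' a b u v) {c : ℝ} (hc : -1 < c) :
    ∫ x in a..b, (binomialKernel c 1 (γ x) * γ' x).im = ∫ x in a..b, ((γ x)⁻¹ * γ' x).im := by
  have step {e : ℝ} (he : -1 < e) :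
      ∫ x in a..b, (binomialKernel (e + 1) 1 (γ x) * γ' x).im =
        ∫ x in a..b, (binomialKernel e 1 (γ x) * γ' x).im := by
    have vanish := h.mul_integral_binomialKernel (c := e + 1) (by linarith) 0
    rw [Nat.cast_zero, zero_mul, add_sub_cancel_right,
      mul_eq_zero_iff_left (by linarith : e + 1 ≠ 0)] at vanish
    rw [intervalIntegral.integral_congr_Ioo_of_le h.le fun x hx => by
      rw [binomialKernel_succ_left (h.im_pos x hx), add_mul, Complex.add_im],
      intervalIntegral.integral_add (h.intervalIntegrable_binomialKernel he 1)
        (h.intervalIntegrable_binomialKernel he 0), vanish, add_zero]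
  rw [← step hc, ← step (by linarith),
    h.integral_binomialKernel_one_of_one_lt (by linarith)]

theorem integral_binomialKernel_succ (h : IsBinomialContour γ γ' a b u v) (n : ℕ) {c : ℝ}
    (hc : -1 < c - n) :
    ∫ x in a..b, (binomialKernel c (n + 1) (γ x) * γ' x).im =
      (∫ x in a..b, ((γ x)⁻¹ * γ' x).im) * gbinom c n := by
  induction n generalizing c with
  | zero =>
    rw [gbinom_zero, mul_one]
    exact h.integral_binomialKernel_one (by simpa using hc)
  | succ n ih =>
    push_cast at hc
    have recursion := h.mul_integral_binomialKernel (c := c) (by linarith [n.cast_nonneg (α := ℝ)])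
      (n + 1)
    rw [ih (by linarith)] at recursion
    push_cast at recursion
    have hn : (n + 1 : ℝ) ≠ 0 := by positivity
    refine mul_left_cancel₀ hn ?_
    rw [← recursion, mul_left_comm (n + 1 : ℝ), succ_mul_gbinom_succ]
    ring

end IsBinomialContour

end ContourIntegrals

section ScaledSinc

lemma contDiff_sinc {n : WithTop ℕ∞} : ContDiff ℝ n Real.sinc := by
  have entire : ContDiff ℂ n (dslope Complex.sin 0) :=
    Differentiable.contDiff <| differentiableOn_univ.1 <|
      (Complex.differentiableOn_dslope univ_mem).2 Complex.differentiable_sin.differentiableOn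
  have sinc_eq : Real.sinc = fun x : ℝ => (dslope Complex.sin 0 x).re := by
    funext x
    rcases eq_or_ne x 0 with rfl | hx
    · simp [Complex.deriv_sin]
    · rw [dslope_of_ne _ (Complex.ofReal_ne_zero.2 hx), slope_def_field, Complex.sin_zero, sub_zero,
        sub_zero, Real.sinc_of_ne_zero hx]
      norm_cast
  rw [sinc_eq]
  exact entire.real_of_complex

/-- The function `x ↦ sin (a * x) / x`, extended by the value `a` at `0`. -/
noncomputable def scaledSinc (a x : ℝ) : ℝ := a * Real.sinc (a * x)

lemma scaledSinc_zero (a : ℝ) : scaledSinc a 0 = a := by simp [scaledSinc]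

lemma mul_scaledSinc (a x : ℝ) : x * scaledSinc a x = Real.sin (a * x) := by
  rcases eq_or_ne (a * x) 0 with h | h
  · simp [scaledSinc, h, mul_comm x]
  · rw [scaledSinc, Real.sinc_of_ne_zero h]
    have := mul_ne_zero_iff.1 h
    field_simp [this.1, this.2]

lemma contDiff_scaledSinc (a : ℝ) {n : WithTop ℕ∞} : ContDiff ℝ n (scaledSinc a) :=
  contDiff_const.mul (contDiff_sinc.comp (contDiff_const.mul contDiff_id))

lemma differentiable_scaledSinc (a : ℝ) : Differentiable ℝ (scaledSinc a) :=
  (contDiff_scaledSinc a (n := 1)).differentiable one_ne_zero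

lemma continuous_scaledSinc (a : ℝ) : Continuous (scaledSinc a) :=
  (differentiable_scaledSinc a).continuous

lemma scaledSinc_pos {a x : ℝ} (ha : 0 < a) (hx : 0 ≤ x) (h : a * x < Real.pi) :
    0 < scaledSinc a x := by
  rcases hx.eq_or_lt with rfl | hx
  · rwa [scaledSinc_zero]
  · refine pos_of_mul_pos_right (a := x) ?_ hx.le
    rw [mul_scaledSinc]
    exact Real.sin_pos_of_pos_of_lt_pi (mul_pos ha hx) h

lemma scaledSinc_nonneg {a x : ℝ} (ha : 0 < a) (hx : 0 ≤ x) (h : a * x ≤ Real.pi) :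
    0 ≤ scaledSinc a x := by
  rcases h.eq_or_lt with h | h
  · have hx₀ : 0 < x := pos_of_mul_pos_right (h ▸ Real.pi_pos) ha.le
    have root := mul_scaledSinc a x
    rw [h, Real.sin_pi] at root
    exact (eq_zero_of_ne_zero_of_mul_left_eq_zero hx₀.ne' root).ge
  · exact (scaledSinc_pos ha hx h).le

lemma logDeriv_scaledSinc {a x : ℝ} (h : Real.sin (a * x) ≠ 0) :
    logDeriv (scaledSinc a) x = a * Real.cot (a * x) - x⁻¹ := by
  have hx : x ≠ 0 := by rintro rfl; simp at h
  have hsin : HasDerivAt (fun t => Real.sin (a * t)) (Real.cos (a * x) * a) x := by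
    simpa using ((hasDerivAt_id x).const_mul a).sin
  rw [← mul_scaledSinc] at h
  have product : logDeriv (fun t => t * scaledSinc a t) x = x⁻¹ + logDeriv (scaledSinc a) x := by
    rw [logDeriv_mul x hx (right_ne_zero_of_mul h) differentiableAt_fun_id
      (differentiable_scaledSinc a x), logDeriv_apply]
    simp
  simp only [mul_scaledSinc] at product
  rw [logDeriv_apply, hsin.deriv] at product
  rw [Real.cot_eq_cos_div_sin]
  linear_combination -product

lemma logDeriv_scaledSinc_div_scaledSinc {a b x : ℝ} (ha : Real.sin (a * x) ≠ 0)
    (hb : Real.sin (b * x) ≠ 0) :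
    logDeriv (fun t => scaledSinc a t / scaledSinc b t) x =
      a * Real.cot (a * x) - b * Real.cot (b * x) := by
  rw [logDeriv_div x _ _ (differentiable_scaledSinc a x) (differentiable_scaledSinc b x),
    logDeriv_scaledSinc ha, logDeriv_scaledSinc hb, sub_sub_sub_cancel_right]
  · rw [← mul_scaledSinc] at ha
    exact right_ne_zero_of_mul ha
  · rw [← mul_scaledSinc] at hb
    exact right_ne_zero_of_mul hb

/- The second factor is positive up to and including `x = π / a`, so this exhibits the simple zero
of `scaledSinc a` there. -/
lemma scaledSinc_eq_mul {a : ℝ} (ha : a ≠ 0) (x : ℝ) :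
    scaledSinc a x = (Real.pi / a - x) *
      ((scaledSinc a x + scaledSinc a (Real.pi / a - x)) / (Real.pi / a)) := by
  have reflect := mul_scaledSinc a (Real.pi / a - x)
  rw [mul_sub, mul_div_cancel₀ _ ha, Real.sin_pi_sub, ← mul_scaledSinc] at reflect
  have hL : Real.pi / a ≠ 0 := div_ne_zero Real.pi_ne_zero ha
  rw [mul_div_assoc', eq_div_iff hL]
  linear_combination -reflect

lemma sq_mul_cot_add_lt {a b x y : ℝ} (hx : 0 < Real.sin x) (hy : 0 < Real.sin y)
    (hxy : 0 < Real.sin (x + y)) (hab : a + b ≠ 0) :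
    (a + b) ^ 2 * Real.cot (x + y) < a ^ 2 * Real.cot x + b ^ 2 * Real.cot y := by
  have difference : a ^ 2 * Real.cot x + b ^ 2 * Real.cot y - (a + b) ^ 2 * Real.cot (x + y) =
      Real.sin x * Real.sin y / Real.sin (x + y) *
        ((a * Real.cot x - b * Real.cot y) ^ 2 + (a + b) ^ 2) := by
    simp only [Real.cot_eq_cos_div_sin]
    field_simp
    rw [Real.sin_add, Real.cos_add]
    ring
  rw [← sub_pos, difference]
  positivity

end ScaledSinc

section BinomialArc

/-- The modulus of `binomialArc p φ`. -/
noncomputable def arcModulus (p φ : ℝ) : ℝ := scaledSinc 1 φ / scaledSinc (p - 1) φ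

/-- The distance of `binomialArc p φ` from the branch point `-1`. -/
noncomputable def arcDistance (p φ : ℝ) : ℝ := scaledSinc p φ / scaledSinc (p - 1) φ

/-- The arc `{z | arg z = p * arg (1 + z)}` in the closed upper half-plane, parametrized by
`φ = arg (1 + z) ∈ [0, π / p]`. It runs from `1 / (p - 1)` to `-1`, and it is where
`(1 + z) ^ p / z` takes its positive real values. -/
noncomputable def binomialArc (p φ : ℝ) : ℂ :=
  arcModulus p φ * Complex.exp ((p * φ : ℝ) * Complex.I)

/-- The derivative of `binomialArc p`. -/
noncomputable def binomialArcDeriv (p φ : ℝ) : ℂ :=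
  binomialArc p φ * (logDeriv (arcModulus p) φ + p * Complex.I)

/-- The value of `(1 + z) ^ p / z` at `z = binomialArc p φ`. -/
noncomputable def arcRatio (p φ : ℝ) : ℝ := arcDistance p φ ^ p / arcModulus p φ

/-- The factor carrying the sign of the density that represents the binomial sequence with
parameters `p` and `r` as moments of `arcRatio p`. -/
noncomputable def angularDensity (p r φ : ℝ) : ℝ :=
  (p - 1) * Real.sin ((p - 1 - r) * φ) / Real.sin ((p - 1) * φ) +
    Real.sin ((r + 1) * φ) / Real.sin φ

variable {p φ : ℝ}

lemma sin_mul_pos_of_mem_Ioo (hφ : φ ∈ Ioo 0 (Real.pi / p)) {s : ℝ} (hs : 0 < s)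
    (hsp : s ≤ p) : 0 < Real.sin (s * φ) := by
  have hpφ : φ * p < Real.pi := (lt_div_iff₀ (hs.trans_le hsp)).1 hφ.2
  refine Real.sin_pos_of_pos_of_lt_pi (mul_pos hs hφ.1) ?_
  nlinarith [hφ.1]

lemma sin_pos_of_mem_Ioo (hp : 1 < p) (hφ : φ ∈ Ioo 0 (Real.pi / p)) : 0 < Real.sin φ := by
  simpa using sin_mul_pos_of_mem_Ioo hφ one_pos hp.le

lemma scaledSinc_pos_of_mem_Icc (hφ : φ ∈ Icc 0 (Real.pi / p)) {s : ℝ} (hs : 0 < s)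
    (hsp : s < p) : 0 < scaledSinc s φ := by
  refine scaledSinc_pos hs hφ.1 ?_
  have hpφ : φ * p ≤ Real.pi := (le_div_iff₀ (hs.trans hsp)).1 hφ.2
  rcases hφ.1.eq_or_lt with rfl | hφ₀
  · simpa using Real.pi_pos
  · nlinarith

lemma scaledSinc_self_pos_of_mem_Ico (hp : 0 < p) (hφ : φ ∈ Ico 0 (Real.pi / p)) :
    0 < scaledSinc p φ :=
  scaledSinc_pos hp hφ.1 (by linarith [(lt_div_iff₀ hp).1 hφ.2])

lemma scaledSinc_self_nonneg_of_mem_Icc (hp : 0 < p) (hφ : φ ∈ Icc 0 (Real.pi / p)) :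
    0 ≤ scaledSinc p φ :=
  scaledSinc_nonneg hp hφ.1 (by linarith [(le_div_iff₀ hp).1 hφ.2])

lemma arcModulus_pos (hp : 1 < p) (hφ : φ ∈ Icc 0 (Real.pi / p)) : 0 < arcModulus p φ :=
  div_pos (scaledSinc_pos_of_mem_Icc hφ one_pos hp)
    (scaledSinc_pos_of_mem_Icc hφ (by linarith) (by linarith))

lemma arcDistance_pos (hp : 1 < p) (hφ : φ ∈ Ico 0 (Real.pi / p)) : 0 < arcDistance p φ :=
  div_pos (scaledSinc_self_pos_of_mem_Ico (by linarith) hφ)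
    (scaledSinc_pos_of_mem_Icc (Ico_subset_Icc_self hφ) (by linarith) (by linarith))

lemma arcDistance_right (hp : 1 < p) : arcDistance p (Real.pi / p) = 0 := by
  rw [arcDistance, scaledSinc_eq_mul (by linarith), sub_self, zero_mul, zero_div]

lemma arcDistance_nonneg (hp : 1 < p) (hφ : φ ∈ Icc 0 (Real.pi / p)) : 0 ≤ arcDistance p φ :=
  div_nonneg (scaledSinc_self_nonneg_of_mem_Icc (by linarith) hφ)
    (scaledSinc_pos_of_mem_Icc hφ (by linarith) (by linarith)).le

lemma contDiffOn_arcModulus (p : ℝ) :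
    ContDiffOn ℝ 1 (arcModulus p) {φ | scaledSinc (p - 1) φ ≠ 0} :=
  (contDiff_scaledSinc 1).contDiffOn.div (contDiff_scaledSinc (p - 1)).contDiffOn fun _ h => h

lemma isOpen_setOf_scaledSinc_ne_zero (a : ℝ) : IsOpen {φ | scaledSinc a φ ≠ 0} :=
  isOpen_ne_fun (continuous_scaledSinc a) continuous_const

lemma Icc_subset_setOf_scaledSinc_ne_zero (hp : 1 < p) :
    Icc 0 (Real.pi / p) ⊆ {φ | scaledSinc (p - 1) φ ≠ 0} :=
  fun _ hφ => (scaledSinc_pos_of_mem_Icc hφ (by linarith) (by linarith)).ne'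

lemma differentiableAt_arcModulus (hp : 1 < p) (hφ : φ ∈ Icc 0 (Real.pi / p)) :
    DifferentiableAt ℝ (arcModulus p) φ :=
  (differentiable_scaledSinc 1 φ).div (differentiable_scaledSinc (p - 1) φ)
    (Icc_subset_setOf_scaledSinc_ne_zero hp hφ)

lemma differentiableAt_arcDistance (hp : 1 < p) (hφ : φ ∈ Icc 0 (Real.pi / p)) :
    DifferentiableAt ℝ (arcDistance p) φ :=
  (differentiable_scaledSinc p φ).div (differentiable_scaledSinc (p - 1) φ)
    (Icc_subset_setOf_scaledSinc_ne_zero hp hφ)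

lemma continuousOn_arcModulus (hp : 1 < p) : ContinuousOn (arcModulus p) (Icc 0 (Real.pi / p)) :=
  fun _ hφ => (differentiableAt_arcModulus hp hφ).continuousAt.continuousWithinAt

lemma continuousOn_logDeriv_arcModulus (hp : 1 < p) :
    ContinuousOn (logDeriv (arcModulus p)) (Icc 0 (Real.pi / p)) :=
  (((contDiffOn_arcModulus p).continuousOn_deriv_of_isOpen (isOpen_setOf_scaledSinc_ne_zero _)
    le_rfl).mono (Icc_subset_setOf_scaledSinc_ne_zero hp)).div (continuousOn_arcModulus hp)
    fun _ hφ => (arcModulus_pos hp hφ).ne'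

lemma continuousOn_arcDistance (hp : 1 < p) :
    ContinuousOn (arcDistance p) (Icc 0 (Real.pi / p)) :=
  fun _ hφ => (differentiableAt_arcDistance hp hφ).continuousAt.continuousWithinAt

lemma exists_arcDistance_eq_sub_mul (hp : 1 < p) :
    ∃ h : ℝ → ℝ, ContinuousOn h (Icc 0 (Real.pi / p)) ∧ (∀ φ ∈ Icc 0 (Real.pi / p), 0 < h φ) ∧
      ∀ φ, arcDistance p φ = (Real.pi / p - φ) * h φ := by
  have hL : 0 < Real.pi / p := div_pos Real.pi_pos (by linarith)
  have hc := continuous_scaledSinc p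
  refine ⟨fun φ => (scaledSinc p φ + scaledSinc p (Real.pi / p - φ)) / (Real.pi / p) /
    scaledSinc (p - 1) φ, ?_, fun φ hφ => ?_, fun φ => ?_⟩
  · exact ContinuousOn.div (by fun_prop) (continuous_scaledSinc (p - 1)).continuousOn
      (Icc_subset_setOf_scaledSinc_ne_zero hp)
  · have hφ' : Real.pi / p - φ ∈ Icc 0 (Real.pi / p) := ⟨sub_nonneg.2 hφ.2, sub_le_self _ hφ.1⟩
    refine div_pos (div_pos ?_ hL) (scaledSinc_pos_of_mem_Icc hφ (by linarith) (by linarith))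
    rcases hφ.2.eq_or_lt with h_right | h_lt
    · refine add_pos_of_nonneg_of_pos (scaledSinc_self_nonneg_of_mem_Icc (by linarith) hφ) ?_
      rw [h_right, sub_self, scaledSinc_zero]
      linarith
    · exact add_pos_of_pos_of_nonneg (scaledSinc_self_pos_of_mem_Ico (by linarith) ⟨hφ.1, h_lt⟩)
        (scaledSinc_self_nonneg_of_mem_Icc (by linarith) hφ')
  · rw [arcDistance, scaledSinc_eq_mul (by linarith : p ≠ 0), mul_div_assoc]

lemma intervalIntegrable_arcDistance_rpow (hp : 1 < p) {c : ℝ} (hc : -1 < c) :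
    IntervalIntegrable (fun φ => arcDistance p φ ^ c) volume 0 (Real.pi / p) := by
  have hL : 0 < Real.pi / p := div_pos Real.pi_pos (by linarith)
  obtain ⟨h, h_cont, h_pos, factor⟩ := exists_arcDistance_eq_sub_mul hp
  have power : IntervalIntegrable (fun φ => (Real.pi / p - φ) ^ c) volume 0 (Real.pi / p) := by
    simpa using ((intervalIntegral.intervalIntegrable_rpow' hc).comp_sub_left (Real.pi / p) (a := 0)
      (b := Real.pi / p)).symm
  rw [← uIcc_of_le hL.le] at h_cont h_pos
  refine (power.mul_continuousOn (h_cont.rpow_const (p := c) fun φ hφ =>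
    .inl (h_pos φ hφ).ne')).congr_uIoo fun φ hφ => ?_
  have hφ' := uIoo_subset_uIcc_self hφ
  rw [factor, Real.mul_rpow (sub_nonneg.2 (uIcc_of_le hL.le ▸ hφ').2) (h_pos φ hφ').le]

lemma scaledSinc_sub_one_add (p φ : ℝ) :
    (scaledSinc (p - 1) φ : ℂ) + scaledSinc 1 φ * Complex.exp ((p * φ : ℝ) * Complex.I) =
      scaledSinc p φ * Complex.exp (φ * Complex.I) := by
  rcases eq_or_ne φ 0 with rfl | hφ
  · simp [scaledSinc_zero]
  · refine mul_left_cancel₀ (Complex.ofReal_ne_zero.2 hφ) ?_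
    have sin_sub : Real.sin ((p - 1) * φ) =
        Real.sin (p * φ) * Real.cos φ - Real.cos (p * φ) * Real.sin φ := by
      rw [← Real.sin_sub, sub_one_mul]
    rw [mul_add, ← mul_assoc, ← mul_assoc, ← Complex.ofReal_mul, ← Complex.ofReal_mul,
      ← Complex.ofReal_mul, mul_scaledSinc, mul_scaledSinc, mul_scaledSinc, one_mul, sin_sub,
      Complex.exp_mul_I, Complex.exp_mul_I]
    push_cast
    ring

lemma one_add_binomialArc (hp : 1 < p) (hφ : φ ∈ Icc 0 (Real.pi / p)) :
    1 + binomialArc p φ = arcDistance p φ * Complex.exp (φ * Complex.I) := by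
  have hne : (scaledSinc (p - 1) φ : ℂ) ≠ 0 :=
    Complex.ofReal_ne_zero.2 (Icc_subset_setOf_scaledSinc_ne_zero hp hφ)
  rw [binomialArc, arcModulus, arcDistance, Complex.ofReal_div, Complex.ofReal_div]
  rw [← mul_left_inj' hne, add_mul, one_mul, div_mul_eq_mul_div, div_mul_cancel₀ _ hne,
    div_mul_eq_mul_div, div_mul_cancel₀ _ hne, scaledSinc_sub_one_add]

lemma norm_one_add_binomialArc (hp : 1 < p) (hφ : φ ∈ Icc 0 (Real.pi / p)) :
    ‖1 + binomialArc p φ‖ = arcDistance p φ := by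
  rw [one_add_binomialArc hp hφ, norm_mul, Complex.norm_exp_ofReal_mul_I, mul_one,
    Complex.norm_of_nonneg (arcDistance_nonneg hp hφ)]

lemma binomialArc_ne_zero (hp : 1 < p) (hφ : φ ∈ Icc 0 (Real.pi / p)) : binomialArc p φ ≠ 0 :=
  mul_ne_zero (Complex.ofReal_ne_zero.2 (arcModulus_pos hp hφ).ne') (Complex.exp_ne_zero _)

lemma hasDerivAt_binomialArc (hp : 1 < p) (hφ : φ ∈ Icc 0 (Real.pi / p)) :
    HasDerivAt (binomialArc p) (binomialArcDeriv p φ) φ := by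
  have modulus := (differentiableAt_arcModulus hp hφ).hasDerivAt.ofReal_comp
  have angle : HasDerivAt (fun φ : ℝ => ((p * φ : ℝ) : ℂ) * Complex.I) (p * Complex.I) φ := by
    simpa using (((hasDerivAt_id φ).const_mul p).ofReal_comp).mul_const Complex.I
  refine (modulus.mul angle.cexp).congr_deriv ?_
  have hne : (arcModulus p φ : ℂ) ≠ 0 := Complex.ofReal_ne_zero.2 (arcModulus_pos hp hφ).ne'
  rw [binomialArcDeriv, binomialArc, logDeriv_apply]
  push_cast
  field_simp

lemma isBinomialContour_binomialArc (hp : 1 < p) :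
    IsBinomialContour (binomialArc p) (binomialArcDeriv p) 0 (Real.pi / p) (1 / (p - 1)) (-1) where
  le := (div_pos Real.pi_pos (by linarith)).le
  hasDerivAt _ := hasDerivAt_binomialArc hp
  continuousOn_deriv := by
    refine ContinuousOn.mul (fun φ hφ =>
      (hasDerivAt_binomialArc hp hφ).continuousAt.continuousWithinAt) ?_
    exact (Complex.continuous_ofReal.comp_continuousOn
      (continuousOn_logDeriv_arcModulus hp)).add continuousOn_const
  im_pos φ hφ := by
    rw [binomialArc, Complex.im_ofReal_mul, Complex.exp_ofReal_mul_I_im]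
    exact mul_pos (arcModulus_pos hp (Ioo_subset_Icc_self hφ))
      (sin_mul_pos_of_mem_Ioo hφ (by linarith) le_rfl)
  apply_left := by simp [binomialArc, arcModulus, scaledSinc_zero]
  apply_right := by
    have := one_add_binomialArc hp (right_mem_Icc.2 (div_pos Real.pi_pos (by linarith)).le)
    rw [arcDistance_right hp, Complex.ofReal_zero, zero_mul] at this
    rw [eq_neg_of_add_eq_zero_right this]
    simp
  left_mem := by
    have : 0 < 1 / (p - 1) := one_div_pos.2 (by linarith)
    exact mem_Ici.2 (by linarith)
  right_mem := mem_Ici.2 le_rfl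
  left_ne_zero := one_div_ne_zero (by linarith)
  right_ne_zero := by norm_num
  intervalIntegrable_norm_rpow c hc := by
    refine (intervalIntegrable_arcDistance_rpow hp hc).congr_uIoo fun φ hφ => ?_
    rw [uIoo_of_le (div_pos Real.pi_pos (by linarith)).le] at hφ
    rw [norm_one_add_binomialArc hp (Ioo_subset_Icc_self hφ)]

lemma integral_inv_mul_binomialArcDeriv (hp : 1 < p) :
    ∫ φ in (0 : ℝ)..Real.pi / p, ((binomialArc p φ)⁻¹ * binomialArcDeriv p φ).im = Real.pi := by
  have hL : 0 ≤ Real.pi / p := (div_pos Real.pi_pos (by linarith)).le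
  rw [intervalIntegral.integral_congr_Ioo_of_le hL fun φ hφ => ?_,
    intervalIntegral.integral_const, sub_zero, smul_eq_mul, div_mul_cancel₀ _ (by linarith)]
  simp [binomialArcDeriv, inv_mul_cancel_left₀ (binomialArc_ne_zero hp (Ioo_subset_Icc_self hφ))]

lemma logDeriv_arcModulus (hp : 1 < p) (hφ : φ ∈ Ioo 0 (Real.pi / p)) :
    logDeriv (arcModulus p) φ = Real.cot φ - (p - 1) * Real.cot ((p - 1) * φ) := by
  rw [← one_mul φ.cot]
  nth_rw 2 [← one_mul φ]
  exact logDeriv_scaledSinc_div_scaledSinc (sin_mul_pos_of_mem_Ioo hφ one_pos hp.le).ne'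
    (sin_mul_pos_of_mem_Ioo hφ (by linarith) (by linarith)).ne'

lemma logDeriv_arcDistance (hp : 1 < p) (hφ : φ ∈ Ioo 0 (Real.pi / p)) :
    logDeriv (arcDistance p) φ = p * Real.cot (p * φ) - (p - 1) * Real.cot ((p - 1) * φ) :=
  logDeriv_scaledSinc_div_scaledSinc (sin_mul_pos_of_mem_Ioo hφ (by linarith) le_rfl).ne'
    (sin_mul_pos_of_mem_Ioo hφ (by linarith) (by linarith)).ne'

lemma angularDensity_eq (hp : 1 < p) (hφ : φ ∈ Ioo 0 (Real.pi / p)) (r : ℝ) :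
    angularDensity p r φ =
      logDeriv (arcModulus p) φ * Real.sin (r * φ) + p * Real.cos (r * φ) := by
  have hsin := sin_pos_of_mem_Ioo hp hφ
  have hsin' : 0 < Real.sin ((p - 1) * φ) :=
    sin_mul_pos_of_mem_Ioo hφ (by linarith) (by linarith)
  rw [logDeriv_arcModulus hp hφ, angularDensity, sub_mul (p - 1) r φ, add_one_mul r φ,
    Real.sin_sub, Real.sin_add, Real.cot_eq_cos_div_sin, Real.cot_eq_cos_div_sin]
  field_simp
  ring

lemma one_add_binomialArc_cpow (hp : 1 < p) (hφ : φ ∈ Ioo 0 (Real.pi / p)) (c : ℝ) :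
    (1 + binomialArc p φ) ^ (c : ℂ) =
      (arcDistance p φ ^ c : ℝ) * Complex.exp ((c * φ : ℝ) * Complex.I) := by
  have hφπ : φ ∈ Ioc (-Real.pi) Real.pi :=
    ⟨by linarith [hφ.1, Real.pi_pos], (hφ.2.trans (div_lt_self Real.pi_pos hp)).le⟩
  rw [Complex.cpow_ofReal, norm_one_add_binomialArc hp (Ioo_subset_Icc_self hφ),
    one_add_binomialArc hp (Ioo_subset_Icc_self hφ), Complex.exp_mul_I,
    Complex.arg_mul_cos_add_sin_mul_I (arcDistance_pos hp (Ioo_subset_Ico_self hφ)) hφπ,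
    mul_comm c φ, Complex.exp_mul_I, Complex.ofReal_cos, Complex.ofReal_sin]

/-- The integrand, along `binomialArc p`, of the Cauchy integral for `π * gbinom c m`. -/
noncomputable def arcIntegrand (p c : ℝ) (m : ℕ) (φ : ℝ) : ℝ :=
  (binomialKernel c (m + 1) (binomialArc p φ) * binomialArcDeriv p φ).im

lemma integral_arcIntegrand (hp : 1 < p) {c : ℝ} {m : ℕ} (hc : -1 < c - m) :
    ∫ φ in (0 : ℝ)..Real.pi / p, arcIntegrand p c m φ = Real.pi * gbinom c m := by
  have := (isBinomialContour_binomialArc hp).integral_binomialKernel_succ m hc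
  rwa [integral_inv_mul_binomialArcDeriv hp] at this

lemma intervalIntegrable_arcIntegrand (hp : 1 < p) {c : ℝ} (hc : -1 < c) (m : ℕ) :
    IntervalIntegrable (arcIntegrand p c m) volume 0 (Real.pi / p) :=
  (isBinomialContour_binomialArc hp).intervalIntegrable_binomialKernel hc (m + 1)

lemma arcIntegrand_eq (hp : 1 < p) (hφ : φ ∈ Ioo 0 (Real.pi / p)) (c : ℝ) (m : ℕ) :
    arcIntegrand p c m φ =
      arcDistance p φ ^ c / arcModulus p φ ^ m * angularDensity p (c - m * p) φ := by
  have polar : binomialKernel c (m + 1) (binomialArc p φ) * binomialArcDeriv p φ =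
      (arcDistance p φ ^ c / arcModulus p φ ^ m : ℝ) *
        (Complex.exp (((c - m * p) * φ : ℝ) * Complex.I) *
          (logDeriv (arcModulus p) φ + p * Complex.I)) := by
    have hne := binomialArc_ne_zero hp (Ioo_subset_Icc_self hφ)
    have angle : Complex.exp (((c - m * p) * φ : ℝ) * Complex.I) =
        Complex.exp ((c * φ : ℝ) * Complex.I) / Complex.exp ((p * φ : ℝ) * Complex.I) ^ m := by
      rw [← Complex.exp_nat_mul, ← Complex.exp_sub]
      push_cast
      ring_nf
    have cancel : (binomialArc p φ ^ (m + 1))⁻¹ * binomialArc p φ = (binomialArc p φ ^ m)⁻¹ := by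
      rw [pow_succ, mul_inv, inv_mul_cancel_right₀ hne]
    rw [binomialKernel, binomialArcDeriv, one_add_binomialArc_cpow hp hφ, mul_assoc,
      ← mul_assoc _ (binomialArc p φ), cancel, binomialArc, angle, mul_pow, Complex.ofReal_div,
      Complex.ofReal_pow]
    ring
  rw [arcIntegrand, polar, Complex.im_ofReal_mul, angularDensity_eq hp hφ, Complex.mul_im,
    Complex.exp_ofReal_mul_I_re, Complex.exp_ofReal_mul_I_im]
  simp only [Complex.add_re, Complex.add_im, Complex.ofReal_re, Complex.ofReal_im,
    Complex.re_ofReal_mul, Complex.im_ofReal_mul, Complex.I_re, Complex.I_im, mul_zero, mul_one,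
    add_zero, zero_add]
  ring

lemma arcIntegrand_nonneg_iff (hp : 1 < p) (hφ : φ ∈ Ioo 0 (Real.pi / p)) (c : ℝ) (m : ℕ) :
    0 ≤ arcIntegrand p c m φ ↔ 0 ≤ angularDensity p (c - m * p) φ := by
  rw [arcIntegrand_eq hp hφ]
  exact mul_nonneg_iff_of_pos_left <| div_pos
    (Real.rpow_pos_of_pos (arcDistance_pos hp (Ioo_subset_Ico_self hφ)) _)
    (pow_pos (arcModulus_pos hp (Ioo_subset_Icc_self hφ)) _)

lemma arcIntegrand_add (hp : 1 < p) (hφ : φ ∈ Ioo 0 (Real.pi / p)) (c : ℝ) (m n : ℕ) :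
    arcIntegrand p (c + n * p) (m + n) φ = arcRatio p φ ^ n * arcIntegrand p c m φ := by
  have hq := arcDistance_pos hp (Ioo_subset_Ico_self hφ)
  have hM := (arcModulus_pos hp (Ioo_subset_Icc_self hφ)).ne'
  rw [arcIntegrand_eq hp hφ, arcIntegrand_eq hp hφ, arcRatio, Real.rpow_add hq, mul_comm (n : ℝ) p,
    Real.rpow_mul hq.le, Real.rpow_natCast, div_pow, pow_add, Nat.cast_add, add_mul,
    mul_comm p n, add_sub_add_right_eq_sub]
  field_simp

lemma continuousOn_arcIntegrand (hp : 1 < p) (c : ℝ) (m : ℕ) :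
    ContinuousOn (arcIntegrand p c m) (Ioo 0 (Real.pi / p)) := by
  have hsub : Ioo 0 (Real.pi / p) ⊆ Icc 0 (Real.pi / p) := Ioo_subset_Icc_self
  have density : ContinuousOn (angularDensity p (c - m * p)) (Ioo 0 (Real.pi / p)) := by
    refine ContinuousOn.add (ContinuousOn.div (by fun_prop) (by fun_prop) fun φ hφ => ?_)
      (ContinuousOn.div (by fun_prop) (by fun_prop) fun φ hφ => (sin_pos_of_mem_Ioo hp hφ).ne')
    exact (sin_mul_pos_of_mem_Ioo hφ (by linarith) (by linarith)).ne'
  refine ContinuousOn.congr (ContinuousOn.mul (ContinuousOn.div ?_ ?_ ?_) density)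
    fun φ hφ => arcIntegrand_eq hp hφ c m
  · exact ((continuousOn_arcDistance hp).mono hsub).rpow_const fun φ hφ =>
      .inl (arcDistance_pos hp (Ioo_subset_Ico_self hφ)).ne'
  · exact ((continuousOn_arcModulus hp).mono hsub).pow m
  · exact fun φ hφ => pow_ne_zero m (arcModulus_pos hp (hsub hφ)).ne'

lemma logDeriv_arcRatio_neg (hp : 1 < p) (hφ : φ ∈ Ioo 0 (Real.pi / p)) :
    logDeriv (arcRatio p) φ < 0 := by
  have hq := arcDistance_pos hp (Ioo_subset_Ico_self hφ)
  have hM := (arcModulus_pos hp (Ioo_subset_Icc_self hφ)).ne'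
  have hdq := differentiableAt_arcDistance hp (Ioo_subset_Icc_self hφ)
  have hdM := differentiableAt_arcModulus hp (Ioo_subset_Icc_self hφ)
  have power : logDeriv (fun x => arcDistance p x ^ p) φ = p * logDeriv (arcDistance p) φ := by
    rw [logDeriv_apply, deriv_rpow_const hdq (.inl hq.ne'), logDeriv_apply,
      Real.rpow_sub_one hq.ne']
    field_simp
  have quotient : logDeriv (arcRatio p) φ =
      logDeriv (fun x => arcDistance p x ^ p) φ - logDeriv (arcModulus p) φ :=
    logDeriv_div φ (Real.rpow_pos_of_pos hq p).ne' hM (hdq.rpow_const (.inl hq.ne')) hdM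
  have hadd : (p - 1) * φ + φ = p * φ := by ring
  have cot_lt := sq_mul_cot_add_lt (a := p - 1) (b := 1) (x := (p - 1) * φ) (y := φ)
    (sin_mul_pos_of_mem_Ioo hφ (by linarith) (by linarith)) (sin_pos_of_mem_Ioo hp hφ)
    (hadd ▸ sin_mul_pos_of_mem_Ioo hφ (by linarith) le_rfl) (by linarith)
  rw [hadd, sub_add_cancel] at cot_lt
  rw [quotient, power, logDeriv_arcDistance hp hφ, logDeriv_arcModulus hp hφ]
  linarith

lemma strictAntiOn_arcRatio (hp : 1 < p) : StrictAntiOn (arcRatio p) (Icc 0 (Real.pi / p)) := by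
  refine strictAntiOn_of_deriv_neg (convex_Icc _ _) ?_ fun φ hφ => ?_
  · exact ((continuousOn_arcDistance hp).rpow_const fun _ _ => .inr (by linarith)).div
      (continuousOn_arcModulus hp) fun φ hφ => (arcModulus_pos hp hφ).ne'
  · rw [interior_Icc] at hφ
    have hρ : 0 < arcRatio p φ := div_pos
      (Real.rpow_pos_of_pos (arcDistance_pos hp (Ioo_subset_Ico_self hφ)) _)
      (arcModulus_pos hp (Ioo_subset_Icc_self hφ))
    have := logDeriv_arcRatio_neg hp hφ
    rwa [logDeriv_apply, div_lt_iff₀ hρ, zero_mul] at this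

lemma gbinom_eq_integral (hp : 1 < p) {r : ℝ} {m : ℕ} (hr : -1 < m * (p - 1) + r) (n : ℕ) :
    gbinom ((n + m : ℕ) * p + r) (n + m) = ∫ φ in (0 : ℝ)..Real.pi / p,
      arcRatio p φ ^ n * (Real.pi⁻¹ * arcIntegrand p (m * p + r) m φ) := by
  have hL : 0 ≤ Real.pi / p := (div_pos Real.pi_pos (by linarith)).le
  have cauchy := integral_arcIntegrand (c := (m * p + r) + n * p) (m := m + n) hp <| by
    push_cast
    nlinarith [mul_nonneg n.cast_nonneg (sub_nonneg.2 hp.le)]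
  rw [intervalIntegral.integral_congr_Ioo_of_le hL fun φ hφ => arcIntegrand_add hp hφ _ m n]
    at cauchy
  simp only [mul_left_comm _ Real.pi⁻¹]
  rw [intervalIntegral.integral_const_mul, cauchy, inv_mul_cancel_left₀ Real.pi_ne_zero, add_comm n]
  push_cast
  ring_nf

theorem isPosDefSeq_gbinom_iff_angularDensity_nonneg (hp : 1 < p) {r : ℝ} {m : ℕ}
    (hr : -1 < m * (p - 1) + r) :
    IsPosDefSeq (fun n : ℕ => gbinom ((n + m : ℕ) * p + r) (n + m)) ↔
      ∀ φ ∈ Ioo 0 (Real.pi / p), 0 ≤ angularDensity p r φ := by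
  have hL : 0 ≤ Real.pi / p := (div_pos Real.pi_pos (by linarith)).le
  have hw := (intervalIntegrable_arcIntegrand (c := m * p + r) hp
    (by linarith [m.cast_nonneg (α := ℝ)]) m).const_mul Real.pi⁻¹
  have sign {φ : ℝ} (hφ : φ ∈ Ioo 0 (Real.pi / p)) :
      0 ≤ Real.pi⁻¹ * arcIntegrand p (m * p + r) m φ ↔ 0 ≤ angularDensity p r φ := by
    rw [mul_nonneg_iff_of_pos_left (inv_pos.2 Real.pi_pos), arcIntegrand_nonneg_iff hp hφ,
      add_sub_cancel_left]
  simp only [gbinom_eq_integral hp hr]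
  refine ⟨fun h φ hφ => (sign hφ).1 <| h.weight_nonneg (strictAntiOn_arcRatio hp) hw
    (continuousOn_const.mul (continuousOn_arcIntegrand hp _ m)) hφ, fun h => ?_⟩
  exact isPosDefSeq_intervalIntegral_pow_mul hL (strictAntiOn_arcRatio hp).antitoneOn hw
    fun φ hφ => (sign hφ).2 (h φ hφ)

end BinomialArc

section BinomialSequences

variable {p r : ℝ}

lemma isPosDefSeq_gbinom_reflect (p r : ℝ) :
    IsPosDefSeq (fun n : ℕ => gbinom (n * (1 - p) + (-1 - r)) n) ↔
      IsPosDefSeq (fun n : ℕ => gbinom (n * p + r) n) := by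
  have reflect (p r : ℝ) (h : IsPosDefSeq fun n : ℕ => gbinom (n * p + r) n) :
      IsPosDefSeq fun n : ℕ => gbinom (n * (1 - p) + (-1 - r)) n := by
    convert h.neg_one_pow_mul using 2 with n
    rw [← gbinom_reflect]
    ring_nf
  refine ⟨fun h => ?_, reflect p r⟩
  simpa only [sub_sub_cancel] using reflect _ _ h

lemma angularDensity_nonneg (hp : 1 < p) (hr₁ : -1 ≤ r) (hr₂ : r ≤ p - 1) {φ : ℝ}
    (hφ : φ ∈ Ioo 0 (Real.pi / p)) : 0 ≤ angularDensity p r φ := by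
  have sin_nonneg {s : ℝ} (hs : 0 ≤ s) (hsp : s ≤ p) : 0 ≤ Real.sin (s * φ) := by
    rcases hs.eq_or_lt with rfl | hs
    · rw [zero_mul, Real.sin_zero]
    · exact (sin_mul_pos_of_mem_Ioo hφ hs hsp).le
  exact add_nonneg
    (div_nonneg (mul_nonneg (by linarith) (sin_nonneg (by linarith) (by linarith)))
      (sin_nonneg (by linarith) (by linarith)))
    (div_nonneg (sin_nonneg (by linarith) (by linarith)) (sin_pos_of_mem_Ioo hp hφ).le)

lemma pi_div_mem_Ioo {s : ℝ} (hp : 0 < p) (hs : p < s) : Real.pi / s ∈ Ioo 0 (Real.pi / p) :=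
  ⟨div_pos Real.pi_pos (hp.trans hs), div_lt_div_of_pos_left Real.pi_pos hp hs⟩

lemma angularDensity_neg_of_lt_neg_one (hp : 1 < p) (hr : r < -1) :
    angularDensity p r (Real.pi / (p - 1 - r)) < 0 := by
  have hs : 0 < p - 1 - r := by linarith
  have hφ := pi_div_mem_Ioo (p := p) (s := p - 1 - r) (by linarith) (by linarith)
  have angle : (r + 1) * (Real.pi / (p - 1 - r)) = p * (Real.pi / (p - 1 - r)) - Real.pi := by
    field_simp
    ring
  rw [angularDensity, angle, Real.sin_sub_pi, mul_div_cancel₀ _ hs.ne', Real.sin_pi, mul_zero,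
    zero_div, zero_add]
  exact div_neg_of_neg_of_pos (neg_neg_of_pos (sin_mul_pos_of_mem_Ioo hφ (by linarith) le_rfl))
    (sin_pos_of_mem_Ioo hp hφ)

lemma angularDensity_neg_of_sub_one_lt (hp : 1 < p) (hr : p - 1 < r) :
    angularDensity p r (Real.pi / (r + 1)) < 0 := by
  have hs : 0 < r + 1 := by linarith
  have hφ := pi_div_mem_Ioo (p := p) (s := r + 1) (by linarith) (by linarith)
  have angle : (p - 1 - r) * (Real.pi / (r + 1)) = p * (Real.pi / (r + 1)) - Real.pi := by
    field_simp
    ring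
  rw [angularDensity, angle, Real.sin_sub_pi, mul_div_cancel₀ _ hs.ne', Real.sin_pi, zero_div,
    add_zero]
  exact div_neg_of_neg_of_pos
    (mul_neg_of_pos_of_neg (by linarith)
      (neg_neg_of_pos (sin_mul_pos_of_mem_Ioo hφ (by linarith) le_rfl)))
    (sin_mul_pos_of_mem_Ioo hφ (by linarith) (by linarith))

lemma angularDensity_nonneg_iff (hp : 1 < p) :
    (∀ φ ∈ Ioo 0 (Real.pi / p), 0 ≤ angularDensity p r φ) ↔ -1 ≤ r ∧ r ≤ p - 1 := by
  refine ⟨fun h => ⟨?_, ?_⟩, fun ⟨hr₁, hr₂⟩ _ hφ => angularDensity_nonneg hp hr₁ hr₂ hφ⟩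
  · by_contra! hr
    exact (h _ (pi_div_mem_Ioo (by linarith) (by linarith))).not_gt
      (angularDensity_neg_of_lt_neg_one hp hr)
  · by_contra! hr
    exact (h _ (pi_div_mem_Ioo (by linarith) (by linarith))).not_gt
      (angularDensity_neg_of_sub_one_lt hp hr)

lemma isPosDefSeq_gbinom_of_neg_one_lt (hp : 1 < p) (hr₁ : -1 < r) (hr₂ : r ≤ p - 1) :
    IsPosDefSeq (fun n : ℕ => gbinom (n * p + r) n) :=
  (isPosDefSeq_gbinom_iff_angularDensity_nonneg (m := 0) hp (by simpa using hr₁)).2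
    ((angularDensity_nonneg_iff hp).2 ⟨hr₁.le, hr₂⟩)

lemma isPosDefSeq_gbinom_of_one_le (hp : 1 ≤ p) (hr₁ : -1 ≤ r) (hr₂ : r ≤ p - 1) :
    IsPosDefSeq (fun n : ℕ => gbinom (n * p + r) n) := by
  have hcont : Continuous fun (ε : ℝ) (n : ℕ) => gbinom (n * (p + ε) + (r + ε)) n :=
    continuous_pi fun n => (continuous_gbinom n).comp (by fun_prop)
  have hlim := (hcont.tendsto 0).mono_left (nhdsWithin_le_nhds (s := Ioi 0))
  simp only [add_zero] at hlim
  refine isClosed_setOf_isPosDefSeq.mem_of_tendsto hlim ?_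
  filter_upwards [self_mem_nhdsWithin] with ε hε
  rw [mem_Ioi] at hε
  exact isPosDefSeq_gbinom_of_neg_one_lt (by linarith) (by linarith) (by linarith)

lemma IsPosDefSeq.mul_add_one_le_of_gbinom
    (h : IsPosDefSeq (fun n : ℕ => gbinom (n * p + r) n)) : r * (r + 1) ≤ 2 * p * (p - 1) := by
  have cauchy_schwarz := h.sq_le_mul 0 1
  simp only [zero_add, mul_zero, mul_one, Nat.cast_one, one_mul, Nat.cast_ofNat, gbinom_zero,
    gbinom_one, gbinom_two] at cauchy_schwarz
  linarith

lemma isPosDefSeq_gbinom_iff_of_one_le (hp : 1 ≤ p) :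
    IsPosDefSeq (fun n : ℕ => gbinom (n * p + r) n) ↔ -1 ≤ r ∧ r ≤ p - 1 := by
  refine ⟨fun h => ?_, fun ⟨hr₁, hr₂⟩ => isPosDefSeq_gbinom_of_one_le hp hr₁ hr₂⟩
  rcases hp.eq_or_lt with rfl | hp
  · have := h.mul_add_one_le_of_gbinom
    constructor <;> nlinarith
  · obtain ⟨k, hk⟩ := exists_nat_gt ((-1 - r) / (p - 1))
    rw [div_lt_iff₀ (sub_pos.2 hp)] at hk
    refine (angularDensity_nonneg_iff hp).1 <|
      (isPosDefSeq_gbinom_iff_angularDensity_nonneg (m := 2 * k) hp ?_).1 (h.shift k)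
    push_cast
    nlinarith [mul_nonneg k.cast_nonneg (sub_nonneg.2 hp.le)]

lemma not_isPosDefSeq_gbinom_of_le_half (hp₀ : 0 < p) (hp : p ≤ 1 / 2) :
    ¬ IsPosDefSeq (fun n : ℕ => gbinom (n * p + r) n) := by
  intro h
  have hr := h.mul_add_one_le_of_gbinom
  have hr₁ : -1 < r := by nlinarith
  have hr₀ : r < 0 := by nlinarith
  let n := ⌈(2 - r) / (2 * p)⌉₊
  have hn₁ : 2 - r ≤ n * (2 * p) := (div_le_iff₀ (by positivity)).1 (Nat.le_ceil _)
  have hn₂ : n * (2 * p) < 2 - r + 2 * p := by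
    have := Nat.ceil_lt_add_one (a := (2 - r) / (2 * p)) (by apply div_nonneg <;> linarith)
    rw [← lt_div_iff₀ (by positivity), add_div, div_self (by positivity)]
    exact this
  have hn : 1 < n := by
    have : (1 : ℝ) < n := by nlinarith
    exact_mod_cast this
  have even_nonpos : gbinom ((2 * n : ℕ) * p + r) (2 * n) ≤ 0 := by
    refine gbinom_even_nonpos (M := 1) ?_ ?_ hn <;> push_cast <;> linarith
  have two_eq_zero :=
    h.two_eq_zero_of_even_eq_zero (by lia : n ≠ 0) (even_nonpos.antisymm (h.even_nonneg n))
  have one_eq_zero := h.one_eq_zero_of_two_eq_zero two_eq_zero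
  simp only [gbinom_two, gbinom_one] at two_eq_zero one_eq_zero
  push_cast at two_eq_zero one_eq_zero
  nlinarith

lemma not_isPosDefSeq_gbinom_of_mem_Ioo (hp : p ∈ Ioo 0 1) :
    ¬ IsPosDefSeq (fun n : ℕ => gbinom (n * p + r) n) := by
  rcases le_total p (1 / 2) with h | h
  · exact not_isPosDefSeq_gbinom_of_le_half hp.1 h
  · rw [← isPosDefSeq_gbinom_reflect]
    exact not_isPosDefSeq_gbinom_of_le_half (by linarith [hp.2]) (by linarith)

end BinomialSequences

theorem binomial_posdef_iff (p r : ℝ) :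
    IsPosDefSeq (fun n : ℕ => gbinom ((n : ℝ) * p + r) n) ↔
      (1 ≤ p ∧ -1 ≤ r ∧ r ≤ p - 1) ∨ (p ≤ 0 ∧ p - 1 ≤ r ∧ r ≤ 0) := by
  rcases le_or_gt 1 p with h₁ | h₁
  · rw [isPosDefSeq_gbinom_iff_of_one_le h₁]
    grind
  rcases le_or_gt p 0 with h₀ | h₀
  · rw [← isPosDefSeq_gbinom_reflect, isPosDefSeq_gbinom_iff_of_one_le (by linarith)]
    grind
  · refine iff_of_false (not_isPosDefSeq_gbinom_of_mem_Ioo ⟨h₀, h₁⟩) ?_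
    grind
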